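/- Define the multigraph N_2 as follows: vertices u, w_1, w_2 and leaves a_1, a_2, b_1, b_2; edges alpha_1 = a_1u, alpha_2 = a_2u, gamma_1 = uw_1, gamma_2 = uw_2, beta_1 = w_1b_1, beta_2 = w_2b_2; exact conflict pairs ({alpha_1, alpha_2}, u) and ({gamma_1, gamma_2}, u). Call an orientation of N_2 valid if each of u, w_1, w_2 has even indegree and the set of edges with head u equals neither {alpha_1, alpha_2} nor {gamma_1, gamma_2}. Say that input edge alpha_i is right-oriented if its head is u, and that output edge beta_j is right-oriented if its head is b_j. Then: (i) every assignment of orientations to alpha_1 and alpha_2 extends to a valid orientation of N_2; (ii) in every valid orientation, the number of right-oriented output edges equals the number of right-oriented input edges; (iii) if exactly one input edge is right-oriented, then for each j in {1,2} there is a valid orientation in which beta_j is right-oriented and the other output edge is not. -/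

import Mathlib

open scoped Classical

noncomputable section

/-- The indegree of vertex `v` under the head-assignment `o`. -/
def indeg {V E : Type*} (o : E → V) (v : V) : ℕ := Nat.card {e // o e = v}

/-- `o` is an orientation of the multigraph with incidence map `ends`:
every edge is directed towards one of its two endpoints (its head). -/
def IsOrient {V E : Type*} (ends : E → V × V) (o : E → V) : Prop :=
  ∀ e, o e = (ends e).1 ∨ o e = (ends e).2

/-- Edge `e` is incident to vertex `v`. -/
def Inc {V E : Type*} (ends : E → V × V) (e : E) (v : V) : Prop :=
  (ends e).1 = v ∨ (ends e).2 = v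

/-- Vertices of the switching network `N₂`. -/
inductive V5 : Type
  | u | w1 | w2 | a1 | a2 | b1 | b2
deriving DecidableEq

/-- Edges of the switching network `N₂`. -/
inductive E5 : Type
  | al1 | al2 | ga1 | ga2 | be1 | be2
deriving DecidableEq

/-- Incidence map of `N₂`: `α i = a_i u`, `γ i = u w_i`, `β i = w_i b_i`. -/
def ends5 : E5 → V5 × V5
  | E5.al1 => (V5.a1, V5.u)
  | E5.al2 => (V5.a2, V5.u)
  | E5.ga1 => (V5.u, V5.w1)
  | E5.ga2 => (V5.u, V5.w2)
  | E5.be1 => (V5.w1, V5.b1)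
  | E5.be2 => (V5.w2, V5.b2)

/-- A valid orientation of `N₂`: each of `u, w₁, w₂` has even indegree and the set of
edges with head `u` equals neither `{α₁, α₂}` nor `{γ₁, γ₂}`. -/
def Valid5 (o : E5 → V5) : Prop :=
  IsOrient ends5 o ∧ Even (indeg o V5.u) ∧ Even (indeg o V5.w1) ∧ Even (indeg o V5.w2) ∧
    {e | o e = V5.u} ≠ ({E5.al1, E5.al2} : Set E5) ∧
    {e | o e = V5.u} ≠ ({E5.ga1, E5.ga2} : Set E5)

instance : Fintype E5 where
  elems := {E5.al1, E5.al2, E5.ga1, E5.ga2, E5.be1, E5.be2}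
  complete e := by cases e <;> simp

/-- The indegree in `N₂` as an explicit sum over the six edges. -/
theorem indeg_eq_sum_edges (o : E5 → V5) (v : V5) :
    indeg o v = (if o E5.al1 = v then 1 else 0) + (if o E5.al2 = v then 1 else 0) +
      (if o E5.ga1 = v then 1 else 0) + (if o E5.ga2 = v then 1 else 0) +
      (if o E5.be1 = v then 1 else 0) + (if o E5.be2 = v then 1 else 0) := by
  have huniv : (Finset.univ : Finset E5) =
      {E5.al1, E5.al2, E5.ga1, E5.ga2, E5.be1, E5.be2} := rfl
  rw [indeg, Nat.card_eq_fintype_card, Fintype.card_subtype, Finset.card_filter, huniv]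
  repeat rw [Finset.sum_insert (by simp)]
  rw [Finset.sum_singleton]
  ring

/-- A set of edges of `N₂` is determined by its membership at the six edges. -/
theorem edgeSet_eq_iff (S T : Set E5) :
    S = T ↔ (E5.al1 ∈ S ↔ E5.al1 ∈ T) ∧ (E5.al2 ∈ S ↔ E5.al2 ∈ T) ∧
      (E5.ga1 ∈ S ↔ E5.ga1 ∈ T) ∧ (E5.ga2 ∈ S ↔ E5.ga2 ∈ T) ∧
      (E5.be1 ∈ S ↔ E5.be1 ∈ T) ∧ (E5.be2 ∈ S ↔ E5.be2 ∈ T) := by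
  refine ⟨by rintro rfl; simp, fun ⟨h₁, h₂, h₃, h₄, h₅, h₆⟩ => Set.ext fun e => ?_⟩
  cases e <;> assumption

/-- The orientation of `N₂` in which `αᵢ` has head `u` iff `sᵢ`, and both `γⱼ` has head `u` and
`βⱼ` has head `bⱼ` iff `tⱼ`. -/
def switchOrient (s₁ s₂ t₁ t₂ : Bool) : E5 → V5
  | E5.al1 => bif s₁ then V5.u else V5.a1
  | E5.al2 => bif s₂ then V5.u else V5.a2
  | E5.ga1 => bif t₁ then V5.u else V5.w1
  | E5.ga2 => bif t₂ then V5.u else V5.w2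
  | E5.be1 => bif t₁ then V5.b1 else V5.w1
  | E5.be2 => bif t₂ then V5.b2 else V5.w2

/-- `switchOrient` is valid when the number of right-oriented outputs equals the number of
right-oriented inputs. -/
theorem valid_switchOrient {s₁ s₂ t₁ t₂ : Bool}
    (h : s₁.toNat + s₂.toNat = t₁.toNat + t₂.toNat) : Valid5 (switchOrient s₁ s₂ t₁ t₂) := by
  refine ⟨fun e => ?_, ?_⟩
  · cases e <;> cases s₁ <;> cases s₂ <;> cases t₁ <;> cases t₂ <;> simp [switchOrient, ends5]
  · simp only [indeg_eq_sum_edges, ne_eq, edgeSet_eq_iff]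
    cases s₁ <;> cases s₂ <;> cases t₁ <;> cases t₂ <;> simp_all [switchOrient]
    all_goals decide

/-- In a valid orientation the numbers of right-oriented outputs and inputs agree. -/
theorem Valid5.outputs_eq_inputs {o : E5 → V5} (h : Valid5 o) :
    ((if o E5.be1 = V5.b1 then 1 else 0) + (if o E5.be2 = V5.b2 then 1 else 0) : ℕ) =
      (if o E5.al1 = V5.u then 1 else 0) + (if o E5.al2 = V5.u then 1 else 0) := by
  obtain ⟨ho, hu, hw₁, hw₂, hα, hγ⟩ := h
  simp only [indeg_eq_sum_edges, ne_eq, edgeSet_eq_iff, Set.mem_ofPred_eq] at hu hw₁ hw₂ hα hγ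
  have h₁ := ho E5.al1
  have h₂ := ho E5.al2
  have h₃ := ho E5.ga1
  have h₄ := ho E5.ga2
  have h₅ := ho E5.be1
  have h₆ := ho E5.be2
  simp only [ends5] at h₁ h₂ h₃ h₄ h₅ h₆
  rcases h₁ with h₁ | h₁ <;> rcases h₂ with h₂ | h₂ <;> rcases h₃ with h₃ | h₃ <;>
    rcases h₄ with h₄ | h₄ <;> rcases h₅ with h₅ | h₅ <;> rcases h₆ with h₆ | h₆ <;>
    simp [h₁, h₂, h₃, h₄, h₅, h₆, Nat.even_iff] at hu hw₁ hw₂ hα hγ ⊢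

/-- the three properties of the gadget `N₂`:
(i) any input orientation extends to a valid orientation;
(ii) the number of right-oriented outputs equals the number of right-oriented inputs;
(iii) with exactly one right-oriented input, either output can be the right-oriented one. -/
theorem stmt_5 :
    (∀ s₁ s₂ : Bool, ∃ o : E5 → V5, Valid5 o ∧
        ((o E5.al1 = V5.u) ↔ s₁ = true) ∧ ((o E5.al2 = V5.u) ↔ s₂ = true))
    ∧
    (∀ o : E5 → V5, Valid5 o →
        ((if o E5.be1 = V5.b1 then 1 else 0) + (if o E5.be2 = V5.b2 then 1 else 0) : ℕ) =
          (if o E5.al1 = V5.u then 1 else 0) + (if o E5.al2 = V5.u then 1 else 0))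
    ∧
    (∀ s₁ s₂ : Bool, s₁ ≠ s₂ →
        (∃ o : E5 → V5, Valid5 o ∧
          ((o E5.al1 = V5.u) ↔ s₁ = true) ∧ ((o E5.al2 = V5.u) ↔ s₂ = true) ∧
          o E5.be1 = V5.b1 ∧ o E5.be2 ≠ V5.b2) ∧
        (∃ o : E5 → V5, Valid5 o ∧
          ((o E5.al1 = V5.u) ↔ s₁ = true) ∧ ((o E5.al2 = V5.u) ↔ s₂ = true) ∧
          o E5.be1 ≠ V5.b1 ∧ o E5.be2 = V5.b2)) := by
  refine ⟨fun s₁ s₂ => ⟨switchOrient s₁ s₂ s₁ s₂, valid_switchOrient rfl, ?_⟩,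
    fun o h => h.outputs_eq_inputs, fun s₁ s₂ hs =>
      ⟨⟨switchOrient s₁ s₂ true false, valid_switchOrient ?_, ?_⟩,
        ⟨switchOrient s₁ s₂ false true, valid_switchOrient ?_, ?_⟩⟩⟩
  all_goals cases s₁ <;> cases s₂ <;> simp_all [switchOrient]
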